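/- Let b ≥ 2 be an integer with smallest prime factor ρ_b, and let a = (a_j)_{j≥1} be a nondecreasing sequence of real weights such that a_j ≥ a·j^r for all j > A, where a > 0, r > 0 and A ∈ ℕ₀. Let C = (b−1)·(A + r^{−1}·Γ(1/r)·a^{−1/r}) + S_∞ + 1 with S_∞ = (b−1)·∑_{j≥1} #{i ∈ ℕ : i + a_j ≤ 1}, and set D = ((log ρ_b)/C)^{(2r+1)/(r+1)}. Then there exists a constant Ĉ > 0, independent of s and d, such that for every s ∈ ℕ and every positive integer d there exists a digital net P over ℤ_b with precision l satisfying |P| = b^d, l ≥ D·d^{(2r+1)/(r+1)} − 1 − a_1, and e^wor(P, W'_{s,a}) ≤ Ĉ · exp( −(D·log b / 2)·d^{(2r+1)/(r+1)} ). -/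

import Mathlib

open MeasureTheory Matrix Filter
open scoped ENNReal BigOperators Topology

noncomputable section

/-- The `b`-adic digit of `k : ℕ` at place `b^i` (i.e. the `(i+1)`-st digit). -/
def natDigit (b k i : ℕ) : ℕ := k / b ^ i % b

/-- The `(i+1)`-st `b`-adic digit of a real number `x ∈ [0,1)`
(using the expansion in which infinitely many digits differ from `b-1`). -/
def realDigit (b : ℕ) (x : ℝ) (i : ℕ) : ℕ := (⌊x * (b : ℝ) ^ (i + 1)⌋ % (b : ℤ)).toNat

/-- The `k`-th one-dimensional `b`-adic Walsh function. -/
def wal1 (b k : ℕ) (x : ℝ) : ℂ :=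
  Complex.exp (2 * Real.pi * Complex.I / (b : ℂ) *
    ((∑ i ∈ Finset.range k, natDigit b k i * realDigit b x i : ℕ) : ℂ))

/-- The `k`-th `s`-dimensional `b`-adic Walsh function. -/
def wal (b : ℕ) {s : ℕ} (k : Fin s → ℕ) (x : Fin s → ℝ) : ℂ :=
  ∏ j, wal1 b (k j) (x j)

/-- The unit cube `[0,1)^s`. -/
def unitCube (s : ℕ) : Set (Fin s → ℝ) := Set.univ.pi fun _ => Set.Ico (0 : ℝ) 1

/-- The `k`-th Walsh coefficient of `f`. -/
def walshCoeff (b : ℕ) {s : ℕ} (f : (Fin s → ℝ) → ℝ) (k : Fin s → ℕ) : ℂ :=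
  ∫ x in unitCube s, (f x : ℂ) * (starRingEnd ℂ) (wal b k x)

/-- The generalized Dick weight `μ_a(k)`, one-dimensional case. -/
def dickWt (b : ℕ) (a : ℝ) (k : ℕ) : ℝ :=
  ∑ i ∈ Finset.range k, if natDigit b k i ≠ 0 then ((i : ℝ) + 1 + a) else 0

/-- The generalized Dick weight `μ_a(k)` for vectors. -/
def dickWtV (b : ℕ) {s : ℕ} (a : Fin s → ℝ) (k : Fin s → ℕ) : ℝ :=
  ∑ j, dickWt b (a j) (k j)

/-- The modified Dick weight `μ'_a(k)`, one-dimensional case. -/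
def mdickWt (b : ℕ) (a : ℝ) (k : ℕ) : ℝ :=
  ∑ i ∈ Finset.range k, if natDigit b k i ≠ 0 then max ((i : ℝ) + 1 + a) 1 else 0

/-- The modified Dick weight `μ'_a(k)` for vectors. -/
def mdickWtV (b : ℕ) {s : ℕ} (a : Fin s → ℝ) (k : Fin s → ℕ) : ℝ :=
  ∑ j, mdickWt b (a j) (k j)

/-- Digitwise subtraction modulo `b` of natural numbers. -/
def dsub (b k k' : ℕ) : ℕ :=
  ∑ i ∈ Finset.range (k + k' + 1), ((natDigit b k i + (b - natDigit b k' i)) % b) * b ^ i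

/-- The integral of `f` over the unit cube. -/
def intBox (s : ℕ) (f : (Fin s → ℝ) → ℝ) : ℝ := ∫ x in unitCube s, f x

/-- Membership in the Walsh space `W_{s,a}`: `f` equals its (convergent) Walsh series
and has finite norm. -/
def MemW (b : ℕ) {s : ℕ} (a : Fin s → ℝ) (f : (Fin s → ℝ) → ℝ) : Prop :=
  (∀ x ∈ unitCube s, HasSum (fun k : Fin s → ℕ => walshCoeff b f k * wal b k x) ((f x : ℂ))) ∧
  BddAbove (Set.range fun k : Fin s → ℕ => ‖walshCoeff b f k‖ * (b : ℝ) ^ dickWtV b a k)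

/-- The norm of the Walsh space `W_{s,a}`. -/
def normW (b : ℕ) {s : ℕ} (a : Fin s → ℝ) (f : (Fin s → ℝ) → ℝ) : ℝ :=
  ⨆ k : Fin s → ℕ, ‖walshCoeff b f k‖ * (b : ℝ) ^ dickWtV b a k

/-- Membership in the modified Walsh space `W'_{s,a}`. -/
def MemW' (b : ℕ) {s : ℕ} (a : Fin s → ℝ) (f : (Fin s → ℝ) → ℝ) : Prop :=
  (∀ x ∈ unitCube s, HasSum (fun k : Fin s → ℕ => walshCoeff b f k * wal b k x) ((f x : ℂ))) ∧
  BddAbove (Set.range fun k : Fin s → ℕ => ‖walshCoeff b f k‖ * (b : ℝ) ^ mdickWtV b a k)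

/-- The norm of the modified Walsh space `W'_{s,a}`. -/
def normW' (b : ℕ) {s : ℕ} (a : Fin s → ℝ) (f : (Fin s → ℝ) → ℝ) : ℝ :=
  ⨆ k : Fin s → ℕ, ‖walshCoeff b f k‖ * (b : ℝ) ^ mdickWtV b a k

/-- The worst-case error of the algorithm `A` over the unit ball of `(H, N)`. -/
def worstErr (s : ℕ) (H : Set ((Fin s → ℝ) → ℝ)) (N : ((Fin s → ℝ) → ℝ) → ℝ)
    (A : ((Fin s → ℝ) → ℝ) → ℝ) : ℝ≥0∞ :=
  ⨆ (f : (Fin s → ℝ) → ℝ) (_ : f ∈ H) (_ : N f ≤ 1), ENNReal.ofReal |intBox s f - A f|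

/-- The `n`-th minimal worst-case error over all algorithms using `n` function values
at points of the unit cube. -/
def minErr (n s : ℕ) (H : Set ((Fin s → ℝ) → ℝ)) (N : ((Fin s → ℝ) → ℝ) → ℝ) : ℝ≥0∞ :=
  ⨅ (t : Fin n → Fin s → ℝ) (_ : ∀ i, t i ∈ unitCube s) (φ : (Fin n → ℝ) → ℝ),
    worstErr s H N fun f => φ fun i => f (t i)

/-- Partial derivative in the `j`-th coordinate. -/
def pd {s : ℕ} (j : Fin s) (f : (Fin s → ℝ) → ℝ) : (Fin s → ℝ) → ℝ :=
  fun x => deriv (fun t => f (Function.update x j t)) (x j)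

/-- The mixed partial derivative `f^{(α)}`. -/
def mpd {s : ℕ} (α : Fin s → ℕ) (f : (Fin s → ℝ) → ℝ) : (Fin s → ℝ) → ℝ :=
  (List.finRange s).foldr (fun j g => (pd j)^[α j] g) f

/-- Membership in the space `S_{s,u}` of smooth functions. -/
def MemS {s : ℕ} (u : Fin s → ℝ) (f : (Fin s → ℝ) → ℝ) : Prop :=
  ContDiff ℝ (⊤ : ℕ∞) f ∧
  BddAbove (Set.range fun α : Fin s → ℕ =>
    (∫ x in unitCube s, |mpd α f x|) / ∏ j, u j ^ α j)

/-- The norm of the space `S_{s,u}`. -/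
def normS {s : ℕ} (u : Fin s → ℝ) (f : (Fin s → ℝ) → ℝ) : ℝ :=
  ⨆ α : Fin s → ℕ, (∫ x in unitCube s, |mpd α f x|) / ∏ j, u j ^ α j

/-- The column vector of the first `m` `b`-adic digits of `k`. -/
def trunc (b m k : ℕ) : Fin m → ZMod b := fun i => (natDigit b k (i : ℕ) : ZMod b)

/-- The `m`-th point of the digital net determined by generating matrices `G`. -/
def netPoint (b : ℕ) {s l d : ℕ} (G : Fin s → Matrix (Fin l) (Fin d) (ZMod b)) (m : ℕ) :
    Fin s → ℝ :=
  fun j => ∑ i : Fin l, (((G j).mulVec (trunc b d m)) i).val / (b : ℝ) ^ ((i : ℕ) + 1)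

/-- The dual net of the digital net determined by `G`. -/
def dualNet (b : ℕ) {s l d : ℕ} (G : Fin s → Matrix (Fin l) (Fin d) (ZMod b)) :
    Set (Fin s → ℕ) :=
  {k | ∑ j, (G j)ᵀ.mulVec (trunc b l (k j)) = 0}

/-- The QMC algorithm given by the digital net with generating matrices `G`. -/
def qmcNet (b : ℕ) {s l d : ℕ} (G : Fin s → Matrix (Fin l) (Fin d) (ZMod b))
    (f : (Fin s → ℝ) → ℝ) : ℝ :=
  ((b : ℝ) ^ d)⁻¹ * ∑ m ∈ Finset.range (b ^ d), f (netPoint b G m)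

/-- `n_j = #{i ∈ ℕ : i + a ≤ 1}` (with `i` ranging over positive integers). -/
def negCount (a : ℝ) : ℕ := Set.ncard {i : ℕ | 0 < i ∧ (i : ℝ) + a ≤ 1}

/-!
The generating function `∑ k, exp (-t * μ'(k))` factorises over the digits of the coordinates of
`k`, and the growth of the weights bounds it uniformly in the dimension. A Chernoff bound with
optimised `t` then shows that at most `ρ_b ^ d` vectors have weight at most
`M = D * d ^ ((2 * r + 1) / (r + 1))`. A nonzero truncated vector lies in the dual net of `G` only
for `G` in a subgroup of index at least `ρ_b ^ d`, and fewer than `ρ_b ^ d` such subgroups cannot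
cover all tuples of generating matrices; so some net has a dual net whose nonzero elements all have
weight larger than `M`. The integration error is the sum of the Walsh coefficients over these
elements: half of the decay `b ^ (-μ'(k))` makes this sum converge, the other half yields
`b ^ (-M / 2)`.
-/

/-! ### Exponential sums over the weights -/

lemma exp_neg_mul_max_le {t : ℝ} (ht : 0 < t) (x : ℝ) :
    Real.exp (-t * max (x + 1) 1) ≤ (if x ≤ 0 then 1 else 0) +
      (Real.exp (-t * max x 0) - Real.exp (-t * max (x + 1) 0)) / t := by
  split_ifs with hx
  · have hexp : Real.exp (-t * max (x + 1) 1) ≤ 1 :=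
      Real.exp_le_one_iff.2 (by nlinarith [le_max_right (x + 1) 1])
    have hanti : Real.exp (-t * max (x + 1) 0) ≤ Real.exp (-t * max x 0) :=
      Real.exp_le_exp.2 (by nlinarith [max_le_max_right 0 (lt_add_one x).le])
    linarith [div_nonneg (sub_nonneg.2 hanti) ht.le]
  · have hx : 0 < x := not_le.1 hx
    rw [max_eq_left (by linarith), max_eq_left hx.le, max_eq_left (by linarith), zero_add,
      le_div_iff₀ ht]
    have hshift : Real.exp (-t * x) = Real.exp (-t * (x + 1)) * Real.exp t := by
      rw [← Real.exp_add]
      ring_nf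
    rw [hshift]
    nlinarith [Real.add_one_le_exp t, Real.exp_pos (-t * (x + 1))]

lemma card_filter_add_nonpos_le_negCount (n : ℕ) (α : ℝ) :
    ((Finset.range n).filter fun i : ℕ => (i : ℝ) + α ≤ 0).card ≤ negCount α := by
  have hfinite : {i : ℕ | 0 < i ∧ (i : ℝ) + α ≤ 1}.Finite :=
    (Set.finite_Iic ⌈1 - α⌉₊).subset fun i hi =>
      Nat.cast_le.1 ((le_sub_iff_add_le.2 hi.2).trans (Nat.le_ceil _))
  rw [← Finset.card_image_of_injective _ Nat.succ_injective, ← Set.ncard_coe_finset]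
  refine Set.ncard_le_ncard (fun i hi => ?_) hfinite
  obtain ⟨j, hj, rfl⟩ := Finset.mem_image.1 hi
  refine ⟨j.succ_pos, ?_⟩
  push_cast
  linarith [(Finset.mem_filter.1 hj).2]

lemma negCount_eq_zero {α : ℝ} (hα : 0 < α) : negCount α = 0 := by
  refine (congrArg Set.ncard (Set.eq_empty_of_forall_notMem ?_)).trans (Set.ncard_empty ℕ)
  rintro i ⟨hi, hle⟩
  have : (1 : ℝ) ≤ i := by exact_mod_cast hi
  linarith

lemma sum_exp_neg_mul_max_le {t : ℝ} (ht : 0 < t) (n : ℕ) (α : ℝ) :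
    ∑ i ∈ Finset.range n, Real.exp (-t * max ((i : ℝ) + 1 + α) 1) ≤
      negCount α + Real.exp (-t * max α 0) / t := by
  let g : ℕ → ℝ := fun i => Real.exp (-t * max ((i : ℝ) + α) 0)
  calc ∑ i ∈ Finset.range n, Real.exp (-t * max ((i : ℝ) + 1 + α) 1)
      ≤ ∑ i ∈ Finset.range n,
          ((if (i : ℝ) + α ≤ 0 then 1 else 0) + (g i - g (i + 1)) / t) := by
        refine Finset.sum_le_sum fun i _ => ?_
        simpa only [g, Nat.cast_add, Nat.cast_one, add_right_comm] using
          exp_neg_mul_max_le ht ((i : ℝ) + α)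
    _ = ((Finset.range n).filter fun i : ℕ => (i : ℝ) + α ≤ 0).card + (g 0 - g n) / t := by
        rw [Finset.sum_add_distrib, Finset.sum_boole, ← Finset.sum_div, Finset.sum_range_sub']
    _ ≤ negCount α + g 0 / t := by
        gcongr
        · exact card_filter_add_nonpos_le_negCount n α
        · exact sub_le_self _ (Real.exp_pos _).le
    _ = negCount α + Real.exp (-t * max α 0) / t := by simp [g]

lemma sum_exp_neg_mul_rpow_le {r c : ℝ} (hr : 0 < r) (hc : 0 < c) (n : ℕ) :
    ∑ i ∈ Finset.range n, Real.exp (-c * ((i : ℝ) + 1) ^ r) ≤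
      r⁻¹ * Real.Gamma (1 / r) * c ^ (-(1 / r)) := by
  have hanti : AntitoneOn (fun x : ℝ => Real.exp (-c * x ^ r)) (Set.Icc 0 (0 + (n : ℝ))) := by
    intro x hx y _ hxy
    have := Real.rpow_le_rpow hx.1 hxy hr.le
    exact Real.exp_le_exp.2 (by nlinarith)
  have hint : IntegrableOn (fun x : ℝ => Real.exp (-c * x ^ r)) (Set.Ioi 0) := by
    simpa using integrableOn_rpow_mul_exp_neg_mul_rpow (s := 0) (by norm_num) hr hc
  calc ∑ i ∈ Finset.range n, Real.exp (-c * ((i : ℝ) + 1) ^ r)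
      = ∑ i ∈ Finset.range n, Real.exp (-c * (0 + ((i + 1 : ℕ) : ℝ)) ^ r) := by simp
    _ ≤ ∫ x in (0 : ℝ)..(0 + (n : ℝ)), Real.exp (-c * x ^ r) := hanti.sum_le_integral
    _ ≤ ∫ x in Set.Ioi (0 : ℝ), Real.exp (-c * x ^ r) := by
        rw [intervalIntegral.integral_of_le (by simp)]
        exact setIntegral_mono_set hint (.of_forall fun x => (Real.exp_pos _).le)
          (.of_forall fun x hx => hx.1)
    _ = r⁻¹ * Real.Gamma (1 / r) * c ^ (-(1 / r)) := by
        rw [integral_exp_neg_mul_rpow hr hc, Real.Gamma_add_one (by positivity), neg_div]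
        ring

/-- The bound `(A + r⁻¹ Γ(1/r) (a t)^{-1/r}) / t + ∑ⱼ #{i ∈ ℕ : i + aⱼ ≤ 1}` for the double sums
`∑ⱼ ∑ᵢ exp(-t max(i + aⱼ, 1))` over finitely many `i, j ≥ 1`. The constant `C` of the main theorem
is `(b - 1) * weightSumBound w a r A 1 + 1`. -/
def weightSumBound (w : ℕ → ℝ) (a r : ℝ) (A : ℕ) (t : ℝ) : ℝ :=
  ((A : ℝ) + r⁻¹ * Real.Gamma (1 / r) * a ^ (-(1 / r)) * t ^ (-(1 / r))) / t +
    ∑' j : ℕ, (negCount (w j) : ℝ)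

section Growth

variable {w : ℕ → ℝ} {a r t : ℝ} {A : ℕ}

lemma weightSumBound_nonneg (ha : 0 < a) (hr : 0 < r) (ht : 0 < t) :
    0 ≤ weightSumBound w a r A t := by
  unfold weightSumBound
  positivity

lemma weightSumBound_le_mul_rpow (hr : 0 < r) (ht : 0 < t) (ht1 : t ≤ 1) :
    weightSumBound w a r A t ≤ weightSumBound w a r A 1 * t ^ (-((r + 1) / r)) := by
  have hS : 0 ≤ ∑' j : ℕ, (negCount (w j) : ℝ) := tsum_nonneg fun _ => Nat.cast_nonneg _
  have hq : 1 ≤ t ^ (-(1 / r)) :=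
    Real.one_le_rpow_of_pos_of_le_one_of_nonpos ht ht1 (by simpa using hr.le)
  have hqt : t ^ (-((r + 1) / r)) = t ^ (-(1 / r)) / t := by
    rw [← Real.rpow_sub_one ht.ne']
    congr 1
    field_simp
    ring
  have hqt1 : 1 ≤ t ^ (-(1 / r)) / t := (one_le_div ht).2 (ht1.trans hq)
  unfold weightSumBound
  rw [hqt, Real.one_rpow, mul_one, div_one, add_mul, mul_div_assoc']
  gcongr
  · rw [add_mul]
    gcongr
    exact le_mul_of_one_le_right (Nat.cast_nonneg A) hq
  · exact le_mul_of_one_le_right hS hqt1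

variable (ha : 0 < a) (hr : 0 < r) (hgrow : ∀ j : ℕ, A ≤ j → a * ((j : ℝ) + 1) ^ r ≤ w j)
include hgrow

lemma exp_neg_mul_max_weight_le (ht : 0 ≤ t) (j : ℕ) :
    Real.exp (-t * max (w j) 0) ≤
      (if j < A then 1 else 0) + Real.exp (-(a * t) * ((j : ℝ) + 1) ^ r) := by
  split_ifs with hj
  · have hexp : Real.exp (-t * max (w j) 0) ≤ 1 :=
      Real.exp_le_one_iff.2 (by nlinarith [le_max_right (w j) 0])
    linarith [Real.exp_pos (-(a * t) * ((j : ℝ) + 1) ^ r)]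
  · rw [zero_add, Real.exp_le_exp]
    nlinarith [hgrow j (not_lt.1 hj), le_max_left (w j) 0]

include ha

lemma sum_negCount_le_tsum (s : ℕ) :
    ∑ j ∈ Finset.range s, (negCount (w j) : ℝ) ≤ ∑' j : ℕ, (negCount (w j) : ℝ) := by
  refine Summable.sum_le_tsum _ (fun _ _ => Nat.cast_nonneg _)
    (summable_of_ne_finset_zero (s := Finset.range A) fun j hj => ?_)
  have hwj : 0 < w j := lt_of_lt_of_le (by positivity) (hgrow j (by simpa using hj))
  rw [negCount_eq_zero hwj, Nat.cast_zero]

include hr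

lemma sum_exp_neg_mul_max_weight_le (ht : 0 < t) (s : ℕ) :
    ∑ j ∈ Finset.range s, Real.exp (-t * max (w j) 0) ≤
      A + r⁻¹ * Real.Gamma (1 / r) * a ^ (-(1 / r)) * t ^ (-(1 / r)) := by
  have hcard : ∑ j ∈ Finset.range s, (if j < A then 1 else 0 : ℝ) ≤ A := by
    rw [Finset.sum_boole]
    exact_mod_cast (Finset.card_le_card fun j hj =>
      Finset.mem_range.2 (Finset.mem_filter.1 hj).2).trans_eq (Finset.card_range A)
  have hrpow := sum_exp_neg_mul_rpow_le hr (mul_pos ha ht) s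
  rw [Real.mul_rpow ha.le ht.le, ← mul_assoc] at hrpow
  refine (Finset.sum_le_sum fun j _ => exp_neg_mul_max_weight_le hgrow ht.le j).trans ?_
  rw [Finset.sum_add_distrib]
  exact add_le_add hcard hrpow

lemma sum_sum_exp_neg_mul_max_le (ht : 0 < t) (s n : ℕ) :
    ∑ j : Fin s, ∑ i ∈ Finset.range n, Real.exp (-t * max ((i : ℝ) + 1 + w j) 1) ≤
      weightSumBound w a r A t := by
  rw [Fin.sum_univ_eq_sum_range fun j =>
    ∑ i ∈ Finset.range n, Real.exp (-t * max ((i : ℝ) + 1 + w j) 1)]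
  refine (Finset.sum_le_sum fun j _ => sum_exp_neg_mul_max_le ht n (w j)).trans ?_
  rw [Finset.sum_add_distrib, ← Finset.sum_div, add_comm]
  have hexp := sum_exp_neg_mul_max_weight_le ha hr hgrow ht s
  have hneg := sum_negCount_le_tsum ha hgrow s
  unfold weightSumBound
  gcongr

end Growth

/-! ### Digits and the modified Dick weight -/

lemma sum_range_eq_sum_range_of_eq_zero {M : Type*} [AddCommMonoid M] {F : ℕ → M} {m n : ℕ}
    (hm : ∀ i, m ≤ i → F i = 0) (hn : ∀ i, n ≤ i → F i = 0) :
    ∑ i ∈ Finset.range m, F i = ∑ i ∈ Finset.range n, F i :=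
  (Finset.eventually_constant_sum hm (le_max_left m n)).symm.trans
    (Finset.eventually_constant_sum hn (le_max_right m n))

lemma natDigit_eq_zero_of_lt {b k i : ℕ} (h : k < b ^ i) : natDigit b k i = 0 := by
  rw [natDigit, Nat.div_eq_of_lt h, Nat.zero_mod]

lemma natDigit_eq_zero_of_le {b k i : ℕ} (hb : 1 < b) (h : k ≤ i) : natDigit b k i = 0 :=
  natDigit_eq_zero_of_lt (h.trans_lt (Nat.lt_pow_self hb))

lemma exists_natDigit_ne_zero {b k : ℕ} (hb : 1 < b) (hk : k ≠ 0) : ∃ i, natDigit b k i ≠ 0 := by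
  refine ⟨Nat.log b k, ?_⟩
  have hpos : 0 < k / b ^ Nat.log b k := Nat.div_pos (Nat.pow_log_le_self b hk) (by positivity)
  have hlt : k / b ^ Nat.log b k < b := by
    rw [Nat.div_lt_iff_lt_mul (by positivity), mul_comm, ← pow_succ]
    exact Nat.lt_pow_succ_log_self hb k
  rw [natDigit, Nat.mod_eq_of_lt hlt]
  exact hpos.ne'

lemma sum_prod_natDigit {R : Type*} [CommSemiring R] (b n : ℕ) (g : Fin n → ℕ → R) :
    ∑ k ∈ Finset.range (b ^ n), ∏ i : Fin n, g i (natDigit b k i) =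
      ∏ i : Fin n, ∑ c ∈ Finset.range b, g i c := by
  rw [← Fin.sum_univ_eq_sum_range fun k => ∏ i : Fin n, g i (natDigit b k i)]
  simp_rw [← Fin.sum_univ_eq_sum_range]
  rw [Fintype.prod_sum, ← (finFunctionFinEquiv (m := b) (n := n)).symm.sum_comp]
  refine Finset.sum_congr rfl fun k _ => Finset.prod_congr rfl fun i _ => ?_
  rw [finFunctionFinEquiv_symm_apply_val, natDigit]

section Weight

variable {b : ℕ} (hb : 1 < b)
include hb

lemma mdickWt_eq_sum_of_lt_pow (α : ℝ) {k n : ℕ} (hk : k < b ^ n) :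
    mdickWt b α k =
      ∑ i : Fin n, if natDigit b k i ≠ 0 then max ((i : ℝ) + 1 + α) 1 else 0 := by
  rw [Fin.sum_univ_eq_sum_range
    fun i : ℕ => if natDigit b k i ≠ 0 then max ((i : ℝ) + 1 + α) 1 else 0]
  refine sum_range_eq_sum_range_of_eq_zero (fun i hi => ?_) fun i hi => ?_
  · exact if_neg (not_not.2 (natDigit_eq_zero_of_le hb hi))
  · exact if_neg (not_not.2 (natDigit_eq_zero_of_lt
      (hk.trans_le (Nat.pow_le_pow_right hb.le hi))))

lemma sum_exp_neg_mul_mdickWt (t α : ℝ) (n : ℕ) :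
    ∑ k ∈ Finset.range (b ^ n), Real.exp (-t * mdickWt b α k) =
      ∏ i : Fin n, (((b : ℝ) - 1) * Real.exp (-t * max ((i : ℝ) + 1 + α) 1) + 1) := by
  let g : Fin n → ℕ → ℝ := fun i c =>
    if c ≠ 0 then Real.exp (-t * max ((i : ℝ) + 1 + α) 1) else 1
  have hprod : ∀ k ∈ Finset.range (b ^ n),
      Real.exp (-t * mdickWt b α k) = ∏ i : Fin n, g i (natDigit b k i) := fun k hk => by
    rw [mdickWt_eq_sum_of_lt_pow hb α (Finset.mem_range.1 hk), Finset.mul_sum, Real.exp_sum]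
    refine Finset.prod_congr rfl fun i _ => ?_
    dsimp only [g]
    split_ifs <;> simp
  have hdigit : ∀ i : Fin n, ∑ c ∈ Finset.range b, g i c =
      ((b : ℝ) - 1) * Real.exp (-t * max ((i : ℝ) + 1 + α) 1) + 1 := fun i => by
    obtain ⟨m, rfl⟩ : ∃ m, b = m + 1 := ⟨b - 1, by omega⟩
    simp [g, Finset.sum_range_succ']
  rw [Finset.sum_congr rfl hprod, sum_prod_natDigit]
  exact Finset.prod_congr rfl fun i _ => hdigit i

lemma sum_exp_neg_mul_mdickWt_le (t α : ℝ) (n : ℕ) :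
    ∑ k ∈ Finset.range (b ^ n), Real.exp (-t * mdickWt b α k) ≤
      Real.exp (((b : ℝ) - 1) *
        ∑ i ∈ Finset.range n, Real.exp (-t * max ((i : ℝ) + 1 + α) 1)) := by
  have hb1 : (0 : ℝ) ≤ (b : ℝ) - 1 := sub_nonneg.2 (by exact_mod_cast hb.le)
  rw [sum_exp_neg_mul_mdickWt hb,
    ← Fin.sum_univ_eq_sum_range fun i : ℕ => Real.exp (-t * max ((i : ℝ) + 1 + α) 1),
    Finset.mul_sum, Real.exp_sum]
  exact Finset.prod_le_prod (fun i _ => by positivity) fun i _ => Real.add_one_le_exp _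

lemma sum_exp_neg_mul_mdickWtV_le {s : ℕ} {α : Fin s → ℝ} {t E : ℝ}
    (hE : ∀ n : ℕ, ∑ j, ∑ i ∈ Finset.range n, Real.exp (-t * max ((i : ℝ) + 1 + α j) 1) ≤ E)
    (F : Finset (Fin s → ℕ)) :
    ∑ k ∈ F, Real.exp (-t * mdickWtV b α k) ≤ Real.exp (((b : ℝ) - 1) * E) := by
  have hb1 : (0 : ℝ) ≤ (b : ℝ) - 1 := sub_nonneg.2 (by exact_mod_cast hb.le)
  obtain ⟨n, hn⟩ : ∃ n : ℕ, F ⊆ Fintype.piFinset fun _ => Finset.range (b ^ n) := by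
    refine ⟨F.sup fun k => Finset.univ.sup k, fun k hk =>
      Fintype.mem_piFinset.2 fun j => Finset.mem_range.2 ?_⟩
    refine lt_of_le_of_lt ?_ (Nat.lt_pow_self hb)
    exact (Finset.le_sup (f := k) (Finset.mem_univ j)).trans
      (Finset.le_sup (f := fun k : Fin s → ℕ => Finset.univ.sup k) hk)
  calc ∑ k ∈ F, Real.exp (-t * mdickWtV b α k)
      ≤ ∑ k ∈ Fintype.piFinset fun _ => Finset.range (b ^ n), Real.exp (-t * mdickWtV b α k) :=
        Finset.sum_le_sum_of_subset_of_nonneg hn fun _ _ _ => (Real.exp_pos _).le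
    _ = ∏ j, ∑ c ∈ Finset.range (b ^ n), Real.exp (-t * mdickWt b (α j) c) := by
        simp_rw [mdickWtV, Finset.mul_sum, Real.exp_sum, Finset.prod_univ_sum]
    _ ≤ ∏ j, Real.exp (((b : ℝ) - 1) *
          ∑ i ∈ Finset.range n, Real.exp (-t * max ((i : ℝ) + 1 + α j) 1)) :=
        Finset.prod_le_prod (fun _ _ => Finset.sum_nonneg fun _ _ => (Real.exp_pos _).le)
          fun j _ => sum_exp_neg_mul_mdickWt_le hb t (α j) n
    _ ≤ Real.exp (((b : ℝ) - 1) * E) := by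
        rw [← Real.exp_sum, ← Finset.mul_sum, Real.exp_le_exp]
        exact mul_le_mul_of_nonneg_left (hE n) hb1

lemma max_le_mdickWtV_of_natDigit_ne_zero {s : ℕ} (α : Fin s → ℝ) {k : Fin s → ℕ} {j : Fin s}
    {i : ℕ} (hi : natDigit b (k j) i ≠ 0) : max ((i : ℝ) + 1 + α j) 1 ≤ mdickWtV b α k := by
  have hterm (α : ℝ) (k i : ℕ) :
      0 ≤ if natDigit b k i ≠ 0 then max ((i : ℝ) + 1 + α) 1 else 0 := by
    split_ifs
    · positivity
    · rfl
  have hik : i < k j := not_le.1 fun h => hi (natDigit_eq_zero_of_le hb h)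
  calc max ((i : ℝ) + 1 + α j) 1
      = if natDigit b (k j) i ≠ 0 then max ((i : ℝ) + 1 + α j) 1 else 0 := (if_pos hi).symm
    _ ≤ mdickWt b (α j) (k j) :=
        Finset.single_le_sum (f := fun i : ℕ => if natDigit b (k j) i ≠ 0 then
          max ((i : ℝ) + 1 + α j) 1 else 0) (fun i _ => hterm _ _ i) (Finset.mem_range.2 hik)
    _ ≤ mdickWtV b α k :=
        Finset.single_le_sum (f := fun j => mdickWt b (α j) (k j))
          (fun j _ => Finset.sum_nonneg fun i _ => hterm _ _ i) (Finset.mem_univ j)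

lemma exists_natDigit_apply_ne_zero {s : ℕ} {k : Fin s → ℕ} (hk : k ≠ 0) :
    ∃ j i, natDigit b (k j) i ≠ 0 := by
  obtain ⟨j, hj⟩ := Function.ne_iff.1 hk
  exact ⟨j, exists_natDigit_ne_zero hb hj⟩

lemma one_le_mdickWtV {s : ℕ} (α : Fin s → ℝ) {k : Fin s → ℕ} (hk : k ≠ 0) :
    1 ≤ mdickWtV b α k := by
  obtain ⟨j, i, hi⟩ := exists_natDigit_apply_ne_zero hb hk
  exact (le_max_right _ _).trans (max_le_mdickWtV_of_natDigit_ne_zero hb α hi)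

end Weight

lemma mdickWtV_zero {b s : ℕ} (α : Fin s → ℝ) : mdickWtV b α 0 = 0 := by
  simp [mdickWtV, mdickWt]

/-! ### Walsh functions at the points of a digital net -/

/-- The real number `0.v₁v₂…v_l` in base `b`; the coordinates of a digital net have this form. -/
def digitPoint {b l : ℕ} (v : Fin l → ZMod b) : ℝ :=
  ∑ i : Fin l, ((v i).val : ℝ) / (b : ℝ) ^ ((i : ℕ) + 1)

section Digits

variable {b : ℕ}

lemma realDigit_add_div_zero {c : ℕ} (hc : c < b) {x : ℝ} (hx : x ∈ Set.Ico (0 : ℝ) 1) :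
    realDigit b ((c + x) / b) 0 = c := by
  have hb0 : (b : ℝ) ≠ 0 := Nat.cast_ne_zero.2 (Nat.ne_zero_of_lt hc)
  rw [realDigit, zero_add, pow_one, div_mul_cancel₀ _ hb0, Int.floor_natCast_add,
    Int.floor_eq_zero_iff.2 hx, add_zero, Int.emod_eq_of_lt (by positivity) (by exact_mod_cast hc),
    Int.toNat_natCast]

lemma realDigit_add_div_succ (hb : b ≠ 0) (c : ℕ) (x : ℝ) (i : ℕ) :
    realDigit b ((c + x) / b) (i + 1) = realDigit b x i := by
  have hb0 : (b : ℝ) ≠ 0 := Nat.cast_ne_zero.2 hb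
  have hshift : ((c : ℝ) + x) / b * (b : ℝ) ^ (i + 1 + 1) =
      ((c * (b : ℤ) ^ i * b : ℤ) : ℝ) + x * (b : ℝ) ^ (i + 1) := by
    push_cast
    field_simp
    ring
  rw [realDigit, realDigit, hshift, Int.floor_intCast_add, Int.mul_add_emod_self_right]

lemma digitPoint_succ {l : ℕ} (v : Fin (l + 1) → ZMod b) :
    digitPoint v = ((v 0).val + digitPoint (Fin.tail v)) / b := by
  rw [digitPoint, digitPoint, Fin.sum_univ_succ, add_div, Finset.sum_div]
  congr 1
  · simp
  · refine Finset.sum_congr rfl fun i _ => ?_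
    rw [Fin.val_succ, pow_succ, div_mul_eq_div_div]
    rfl

variable [NeZero b]

lemma digitPoint_mem_Ico {l : ℕ} (v : Fin l → ZMod b) : digitPoint v ∈ Set.Ico (0 : ℝ) 1 := by
  induction l with
  | zero => simp [digitPoint]
  | succ l ih =>
    obtain ⟨hnonneg, hlt⟩ := ih (Fin.tail v)
    have hb0 : (0 : ℝ) < b := Nat.cast_pos.2 (NeZero.pos b)
    have hv0 : ((v 0).val : ℝ) + 1 ≤ b := by exact_mod_cast (v 0).val_lt
    rw [digitPoint_succ]
    refine ⟨by positivity, ?_⟩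
    rw [div_lt_one hb0]
    linarith

lemma realDigit_digitPoint {l : ℕ} (v : Fin l → ZMod b) (i : Fin l) :
    realDigit b (digitPoint v) i = (v i).val := by
  induction l with
  | zero => exact i.elim0
  | succ l ih =>
    rw [digitPoint_succ]
    refine i.cases ?_ fun i => ?_
    · exact realDigit_add_div_zero (v 0).val_lt (digitPoint_mem_Ico _)
    · rw [Fin.val_succ, realDigit_add_div_succ (NeZero.ne b), ih, Fin.tail]

lemma realDigit_digitPoint_of_le {l : ℕ} (v : Fin l → ZMod b) {i : ℕ} (hi : l ≤ i) :
    realDigit b (digitPoint v) i = 0 := by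
  induction l generalizing i with
  | zero => simp [digitPoint, realDigit]
  | succ l ih =>
    obtain ⟨i, rfl⟩ : ∃ i', i = i' + 1 := ⟨i - 1, by omega⟩
    rw [digitPoint_succ, realDigit_add_div_succ (NeZero.ne b), ih _ (by omega)]

lemma wal1_digitPoint (hb : 1 < b) {l : ℕ} (k : ℕ) (v : Fin l → ZMod b) :
    wal1 b k (digitPoint v) = ZMod.stdAddChar (trunc b l k ⬝ᵥ v) := by
  let F : ℕ → ZMod b := fun i => (natDigit b k i : ZMod b) * realDigit b (digitPoint v) i
  have hF : trunc b l k ⬝ᵥ v = ∑ i ∈ Finset.range k, F i :=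
    calc trunc b l k ⬝ᵥ v = ∑ i : Fin l, F i := by
          simp [F, dotProduct, trunc, realDigit_digitPoint]
      _ = ∑ i ∈ Finset.range l, F i := Fin.sum_univ_eq_sum_range F l
      _ = ∑ i ∈ Finset.range k, F i :=
          sum_range_eq_sum_range_of_eq_zero
            (fun i hi => by simp [F, realDigit_digitPoint_of_le v hi])
            (fun i hi => by simp [F, natDigit_eq_zero_of_le hb hi])
  have hcast : trunc b l k ⬝ᵥ v = ((∑ i ∈ Finset.range k,
      natDigit b k i * realDigit b (digitPoint v) i : ℕ) : ℤ) := by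
    rw [hF]
    push_cast
    rfl
  rw [hcast, ZMod.stdAddChar_coe, wal1]
  congr 1
  push_cast
  ring

end Digits

section Net

lemma addChar_map_sum {ι A M : Type*} [AddCommMonoid A] [CommMonoid M] (ψ : AddChar A M)
    (s : Finset ι) (f : ι → A) : ψ (∑ i ∈ s, f i) = ∏ i ∈ s, ψ (f i) :=
  map_prod ψ.toMonoidHom (fun i => Multiplicative.ofAdd (f i)) s

lemma sum_range_natCast_zmod {M : Type*} [AddCommMonoid M] (b : ℕ) [NeZero b] (F : ZMod b → M) :
    ∑ c ∈ Finset.range b, F (c : ZMod b) = ∑ x, F x :=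
  Finset.sum_nbij' (fun c => (c : ZMod b)) ZMod.val (by simp)
    (fun x _ => Finset.mem_range.2 x.val_lt)
    (fun _ hc => ZMod.val_cast_of_lt (Finset.mem_range.1 hc)) (by simp) (by simp)

lemma sum_stdAddChar_dotProduct_trunc {b d : ℕ} [NeZero b] (c : Fin d → ZMod b) :
    ∑ m ∈ Finset.range (b ^ d), (ZMod.stdAddChar (c ⬝ᵥ trunc b d m) : ℂ) =
      if c = 0 then (b : ℂ) ^ d else 0 := by
  have hprod (m : ℕ) : (ZMod.stdAddChar (c ⬝ᵥ trunc b d m) : ℂ) =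
      ∏ i : Fin d, ZMod.stdAddChar ((natDigit b m i : ZMod b) * c i) := by
    simp_rw [dotProduct, addChar_map_sum, trunc, mul_comm]
  have hfactor (i : Fin d) : ∑ e ∈ Finset.range b, (ZMod.stdAddChar ((e : ZMod b) * c i) : ℂ) =
      if c i = 0 then (b : ℂ) else 0 := by
    rw [sum_range_natCast_zmod b fun x => (ZMod.stdAddChar (x * c i) : ℂ),
      AddChar.sum_mulShift _ (ZMod.isPrimitive_stdAddChar b), ZMod.card]
    split_ifs <;> simp
  simp_rw [hprod]
  rw [sum_prod_natDigit b d fun i e => (ZMod.stdAddChar ((e : ZMod b) * c i) : ℂ)]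
  simp_rw [hfactor]
  split_ifs with hc
  · simp [hc]
  · obtain ⟨i, hi⟩ := Function.ne_iff.1 hc
    exact Finset.prod_eq_zero (Finset.mem_univ i) (if_neg hi)

variable {b s l d : ℕ} (hb : 1 < b) (G : Fin s → Matrix (Fin l) (Fin d) (ZMod b))

lemma netPoint_mem_unitCube [NeZero b] (m : ℕ) : netPoint b G m ∈ unitCube s :=
  fun j _ => digitPoint_mem_Ico ((G j).mulVec (trunc b d m))

include hb

lemma wal_netPoint [NeZero b] (m : ℕ) (k : Fin s → ℕ) :
    wal b k (netPoint b G m) =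
      ZMod.stdAddChar ((∑ j, (G j)ᵀ.mulVec (trunc b l (k j))) ⬝ᵥ trunc b d m) := by
  have hwal1 (j : Fin s) : wal1 b (k j) (netPoint b G m j) =
      ZMod.stdAddChar ((G j)ᵀ.mulVec (trunc b l (k j)) ⬝ᵥ trunc b d m) := by
    rw [Matrix.mulVec_transpose, ← Matrix.dotProduct_mulVec]
    exact wal1_digitPoint hb (k j) _
  simp_rw [wal, hwal1]
  rw [← addChar_map_sum, sum_dotProduct]

open Classical in
lemma sum_wal_netPoint (k : Fin s → ℕ) :
    ∑ m ∈ Finset.range (b ^ d), wal b k (netPoint b G m) =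
      if k ∈ dualNet b G then (b : ℂ) ^ d else 0 := by
  have : NeZero b := ⟨by omega⟩
  simp_rw [wal_netPoint hb]
  rw [sum_stdAddChar_dotProduct_trunc]
  exact if_congr Iff.rfl rfl rfl

end Net

/-! ### Quadrature error on the modified Walsh space -/

section Error

variable {b s l d : ℕ} (hb : 1 < b) {f : (Fin s → ℝ) → ℝ}
  (G : Fin s → Matrix (Fin l) (Fin d) (ZMod b))

lemma walshCoeff_zero (b : ℕ) (f : (Fin s → ℝ) → ℝ) : walshCoeff b f 0 = (intBox s f : ℂ) := by
  simp only [walshCoeff, intBox, wal, wal1, Pi.zero_apply, Finset.range_zero, Finset.sum_empty,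
    Nat.cast_zero, mul_zero, Complex.exp_zero, Finset.prod_const_one, map_one, mul_one]
  exact integral_ofReal

include hb

open Classical in
lemma hasSum_walshCoeff_dualNet
    (hf : ∀ x ∈ unitCube s, HasSum (fun k => walshCoeff b f k * wal b k x) (f x : ℂ)) :
    HasSum (fun k => if k ∈ dualNet b G then walshCoeff b f k else 0) (qmcNet b G f : ℂ) := by
  have : NeZero b := ⟨by omega⟩
  have hbd : (b : ℂ) ^ d ≠ 0 := pow_ne_zero d (Nat.cast_ne_zero.2 (NeZero.ne b))
  have hmean := (hasSum_sum (s := Finset.range (b ^ d))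
    fun m _ => hf _ (netPoint_mem_unitCube G m)).mul_left ((b : ℂ) ^ d)⁻¹
  simp_rw [← Finset.mul_sum, sum_wal_netPoint hb] at hmean
  have hqmc : (qmcNet b G f : ℂ) =
      ((b : ℂ) ^ d)⁻¹ * ∑ m ∈ Finset.range (b ^ d), (f (netPoint b G m) : ℂ) := by
    simp [qmcNet]
  rw [hqmc]
  refine hmean.congr_fun fun k => ?_
  split_ifs
  · field_simp
  · simp

open Classical in
lemma hasSum_qmcNet_sub_intBox
    (hf : ∀ x ∈ unitCube s, HasSum (fun k => walshCoeff b f k * wal b k x) (f x : ℂ)) :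
    HasSum (fun k => if k ∈ dualNet b G ∧ k ≠ 0 then walshCoeff b f k else 0)
      (qmcNet b G f - intBox s f : ℂ) := by
  have hzero : (0 : Fin s → ℕ) ∈ dualNet b G := by
    simp [dualNet, trunc, natDigit, Matrix.mulVec, dotProduct, funext_iff]
  rw [← walshCoeff_zero b f]
  refine ((hasSum_walshCoeff_dualNet hb G hf).sub
    (hasSum_ite_eq 0 (walshCoeff b f 0))).congr_fun fun k => ?_
  by_cases hk : k = 0
  · simp [hk, hzero]
  · simp [hk]

lemma norm_walshCoeff_le {α : Fin s → ℝ} (hf : MemW' b α f) (k : Fin s → ℕ) :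
    ‖walshCoeff b f k‖ ≤ normW' b α f * Real.exp (-Real.log b * mdickWtV b α k) := by
  have hb0 : (0 : ℝ) < b := Nat.cast_pos.2 (by omega)
  have hle : ‖walshCoeff b f k‖ * (b : ℝ) ^ mdickWtV b α k ≤ normW' b α f := le_ciSup hf.2 k
  rwa [neg_mul, Real.exp_neg, ← Real.rpow_def_of_pos hb0, ← div_eq_mul_inv,
    le_div_iff₀ (Real.rpow_pos_of_pos hb0 _)]

lemma abs_intBox_sub_qmcNet_le {α : Fin s → ℝ} (hf : MemW' b α f) {t M E : ℝ}
    (ht : t ≤ Real.log b)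
    (hE : ∀ F : Finset (Fin s → ℕ), ∑ k ∈ F, Real.exp (-t * mdickWtV b α k) ≤ E)
    (hG : ∀ k ∈ dualNet b G, k ≠ 0 → M ≤ mdickWtV b α k) :
    |intBox s f - qmcNet b G f| ≤
      normW' b α f * (E * Real.exp (-((Real.log b - t) * M))) := by
  classical
  have hnorm : 0 ≤ normW' b α f := Real.iSup_nonneg fun k => by positivity
  have hsummable : Summable fun k : Fin s → ℕ => Real.exp (-t * mdickWtV b α k) :=
    summable_of_sum_le (fun _ => (Real.exp_pos _).le) hE
  have hcoeff (k : Fin s → ℕ) :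
      ‖if k ∈ dualNet b G ∧ k ≠ 0 then walshCoeff b f k else 0‖ ≤ normW' b α f *
        (Real.exp (-t * mdickWtV b α k) * Real.exp (-((Real.log b - t) * M))) := by
    split_ifs with hk
    · refine (norm_walshCoeff_le hb hf k).trans (mul_le_mul_of_nonneg_left ?_ hnorm)
      rw [← Real.exp_add, Real.exp_le_exp]
      nlinarith [hG k hk.1 hk.2]
    · rw [norm_zero]
      positivity
  have hbound := tsum_of_norm_bounded ((hsummable.hasSum.mul_right _).mul_left _) hcoeff
  rw [(hasSum_qmcNet_sub_intBox hb G hf.1).tsum_eq, ← Complex.ofReal_sub, Complex.norm_real,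
    Real.norm_eq_abs, abs_sub_comm] at hbound
  refine hbound.trans ?_
  gcongr
  exact hsummable.tsum_le_of_sum_le hE

lemma worstErr_qmcNet_le {α : Fin s → ℝ} {t M E : ℝ} (ht : t ≤ Real.log b)
    (hE : ∀ F : Finset (Fin s → ℕ), ∑ k ∈ F, Real.exp (-t * mdickWtV b α k) ≤ E)
    (hG : ∀ k ∈ dualNet b G, k ≠ 0 → M ≤ mdickWtV b α k) :
    worstErr s {f | MemW' b α f} (normW' b α) (qmcNet b G) ≤
      ENNReal.ofReal (E * Real.exp (-((Real.log b - t) * M))) := by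
  have hE0 : 0 ≤ E := by simpa using hE ∅
  refine iSup₂_le fun f hf => iSup_le fun hnorm => ENNReal.ofReal_le_ofReal ?_
  exact (abs_intBox_sub_qmcNet_le hb G hf ht hE hG).trans
    (mul_le_of_le_one_left (by positivity) hnorm)

end Error

/-! ### Generating matrices whose dual net avoids prescribed vectors -/

section Existence

lemma minFac_le_addOrderOf {b : ℕ} [NeZero b] {c : ZMod b} (hc : c ≠ 0) :
    b.minFac ≤ addOrderOf c := by
  have htwo : 2 ≤ addOrderOf c := by
    have hpos := addOrderOf_pos c
    have hne : addOrderOf c ≠ 1 := mt AddMonoid.addOrderOf_eq_one_iff.1 hc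
    omega
  exact Nat.minFac_le_of_dvd htwo (by simpa using addOrderOf_dvd_natCard c)

variable {b s l d : ℕ}

/-- The dual-net condition on truncated digit vectors `κ`, read as a homomorphism in the generating
matrices: `G ↦ ∑ j, (G j)ᵀ κ_j`, so that `k ∈ dualNet b G` iff `G` lies in the kernel of
`dualMap d (fun j => trunc b l (k j))`. -/
def dualMap (d : ℕ) (κ : Fin s → Fin l → ZMod b) :
    (Fin s → Matrix (Fin l) (Fin d) (ZMod b)) →+ (Fin d → ZMod b) where
  toFun G := ∑ j, (G j)ᵀ.mulVec (κ j)
  map_zero' := by simp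
  map_add' G G' := by simp [Matrix.add_mulVec, Finset.sum_add_distrib]

lemma dualMap_single (κ : Fin s → Fin l → ZMod b) (j : Fin s)
    (M : Matrix (Fin l) (Fin d) (ZMod b)) :
    dualMap d κ (Pi.single j M) = Mᵀ.mulVec (κ j) := by
  simp only [dualMap, AddMonoidHom.coe_mk, ZeroHom.coe_mk]
  rw [Finset.sum_eq_single j (fun j' _ hj' => by simp [Pi.single_eq_of_ne hj']) (by simp)]
  simp

lemma mem_range_dualMap {κ : Fin s → Fin l → ZMod b} {j : Fin s} {i : Fin l} {u : Fin d → ZMod b}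
    (hu : ∀ e, u e ∈ AddSubgroup.zmultiples (κ j i)) : u ∈ (dualMap d κ).range := by
  choose n hn using fun e => AddSubgroup.mem_zmultiples_iff.1 (hu e)
  refine ⟨Pi.single j (Matrix.of fun i' e => if i' = i then (n e : ZMod b) else 0), ?_⟩
  ext e
  simp [dualMap_single, Matrix.mulVec, dotProduct, ← hn]

lemma minFac_pow_le_index_ker_dualMap [NeZero b] {κ : Fin s → Fin l → ZMod b} {j : Fin s}
    {i : Fin l} (h : κ j i ≠ 0) : b.minFac ^ d ≤ (dualMap d κ).ker.index := by
  rw [AddSubgroup.index_ker]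
  calc b.minFac ^ d ≤ addOrderOf (κ j i) ^ d := Nat.pow_le_pow_left (minFac_le_addOrderOf h) d
    _ = Nat.card (Fin d → AddSubgroup.zmultiples (κ j i)) := by
      rw [Nat.card_fun, Nat.card_zmultiples, Nat.card_fin]
    _ ≤ Nat.card (dualMap d κ).range :=
      Nat.card_le_card_of_injective
        (fun u => ⟨fun e => u e, mem_range_dualMap fun e => (u e).2⟩)
        fun _ _ huv => funext fun e => Subtype.ext (congrFun (congrArg Subtype.val huv) e)

lemma exists_forall_notMem_dualNet [NeZero b] {B : Finset (Fin s → ℕ)}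
    (hB : ∀ k ∈ B, ∃ j : Fin s, ∃ i : Fin l, trunc b l (k j) i ≠ 0)
    (hcard : B.card < b.minFac ^ d) :
    ∃ G : Fin s → Matrix (Fin l) (Fin d) (ZMod b), ∀ k ∈ B, k ∉ dualNet b G := by
  by_contra! hcover
  -- Otherwise `B.card` subgroups cover the group of generating matrices, so one of them has index
  -- at most `B.card`.
  obtain ⟨k, hk, -, hindex⟩ := AddSubgroup.exists_index_le_card_of_leftCoset_cover
    (s := B) (g := 0) (H := fun k => (dualMap d fun j => trunc b l (k j)).ker) <| by
      refine Set.eq_univ_of_forall fun G => ?_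
      obtain ⟨k, hk, hkG⟩ := hcover G
      simp only [Pi.zero_apply, Set.mem_iUnion, mem_leftAddCoset_iff, neg_zero, zero_add]
      exact ⟨k, hk, hkG⟩
  obtain ⟨j, i, hji⟩ := hB k hk
  exact (hcard.trans_le (minFac_pow_le_index_ker_dualMap hji)).not_ge hindex

variable (hb : 1 < b)
include hb

lemma trunc_apply_ne_zero {k : ℕ} {i : Fin l} (h : natDigit b k i ≠ 0) : trunc b l k i ≠ 0 := by
  rw [trunc, Ne, ZMod.natCast_eq_zero_iff]
  exact Nat.not_dvd_of_pos_of_lt (Nat.pos_of_ne_zero h) (Nat.mod_lt _ (by omega))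

variable {α : Fin s → ℝ} {M : ℝ} (hl : ∀ j, M - α j ≤ l)
include hl

lemma exists_trunc_apply_ne_zero {k : Fin s → ℕ} (hk : k ≠ 0) (hkM : mdickWtV b α k ≤ M) :
    ∃ j : Fin s, ∃ i : Fin l, trunc b l (k j) i ≠ 0 := by
  obtain ⟨j, i, hji⟩ := exists_natDigit_apply_ne_zero hb hk
  have hweight : (i : ℝ) + 1 + α j ≤ M :=
    ((le_max_left _ _).trans (max_le_mdickWtV_of_natDigit_ne_zero hb α hji)).trans hkM
  have hil : i < l := by
    have := hl j
    exact_mod_cast (by linarith : (i : ℝ) < l)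
  exact ⟨j, ⟨i, hil⟩, trunc_apply_ne_zero hb hji⟩

lemma exists_forall_mem_dualNet_lt_mdickWtV (hM : 0 ≤ M)
    (hcount : ∀ F : Finset (Fin s → ℕ), (∀ k ∈ F, mdickWtV b α k ≤ M) → F.card ≤ b.minFac ^ d) :
    ∃ G : Fin s → Matrix (Fin l) (Fin d) (ZMod b),
      ∀ k ∈ dualNet b G, k ≠ 0 → M < mdickWtV b α k := by
  have : NeZero b := ⟨by omega⟩
  have hfin : {k : Fin s → ℕ | mdickWtV b α k ≤ M}.Finite := by
    by_contra hinf
    obtain ⟨F, hF, hcard⟩ := Set.Infinite.exists_subset_card_eq hinf (b.minFac ^ d + 1)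
    have := hcount F fun k hk => hF hk
    omega
  have hzero : (0 : Fin s → ℕ) ∈ hfin.toFinset := by simpa [mdickWtV_zero] using hM
  obtain ⟨G, hG⟩ := exists_forall_notMem_dualNet (d := d) (l := l) (B := hfin.toFinset.erase 0)
    (fun k hk => by
      rw [Finset.mem_erase, Set.Finite.mem_toFinset] at hk
      exact exists_trunc_apply_ne_zero hb hl hk.1 hk.2)
    ((Finset.card_erase_lt_of_mem hzero).trans_le (hcount _ fun k hk => by simpa using hk))
  refine ⟨G, fun k hkG hk => ?_⟩
  by_contra! hkM
  exact hG k (by simpa [hk] using hkM) hkG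

end Existence

/-! ### Counting vectors of bounded weight -/

lemma card_le_mul_exp_of_sum_exp_neg_mul_le {ι : Type*} {F : Finset ι} {μ : ι → ℝ} {t E M : ℝ}
    (ht : 0 ≤ t) (hE : ∑ k ∈ F, Real.exp (-t * μ k) ≤ E) (hM : ∀ k ∈ F, μ k ≤ M) :
    (F.card : ℝ) ≤ E * Real.exp (t * M) := by
  have hterm : ∀ k ∈ F, Real.exp (-t * M) ≤ Real.exp (-t * μ k) := fun k hk =>
    Real.exp_le_exp.2 (mul_le_mul_of_nonpos_left (hM k hk) (neg_nonpos.2 ht))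
  have hcard : (F.card : ℝ) * Real.exp (-(t * M)) ≤ E := by
    simpa using (Finset.card_nsmul_le_sum F _ _ hterm).trans hE
  rwa [Real.exp_neg, ← div_eq_mul_inv, div_le_iff₀ (Real.exp_pos _)] at hcard

section Count

variable {b s : ℕ} {w : ℕ → ℝ} {a r : ℝ} {A : ℕ} (hb : 1 < b) (ha : 0 < a) (hr : 0 < r)
  (hgrow : ∀ j : ℕ, A ≤ j → a * ((j : ℝ) + 1) ^ r ≤ w j)
include hb

include ha hr hgrow in
lemma sum_exp_neg_mul_mdickWtV_le_exp_weightSumBound {t : ℝ} (ht : 0 < t)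
    (F : Finset (Fin s → ℕ)) :
    ∑ k ∈ F, Real.exp (-t * mdickWtV b (fun j : Fin s => w j) k) ≤
      Real.exp (((b : ℝ) - 1) * weightSumBound w a r A t) :=
  sum_exp_neg_mul_mdickWtV_le hb (fun n => sum_sum_exp_neg_mul_max_le ha hr hgrow ht s n) F

lemma card_le_one_of_forall_mdickWtV_lt_one {α : Fin s → ℝ} {F : Finset (Fin s → ℕ)}
    (hF : ∀ k ∈ F, mdickWtV b α k < 1) : F.card ≤ 1 := by
  have hzero : ∀ k ∈ F, k = 0 := fun k hk => by
    by_contra hne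
    exact (one_le_mdickWtV hb α hne).not_gt (hF k hk)
  exact Finset.card_le_one.2 fun k hk k' hk' => (hzero k hk).trans (hzero k' hk').symm

include ha hr hgrow

lemma card_le_exp_of_one_le_of_forall_mdickWtV_le {M : ℝ} (hM : 1 ≤ M) {F : Finset (Fin s → ℕ)}
    (hF : ∀ k ∈ F, mdickWtV b (fun j : Fin s => w j) k ≤ M) :
    (F.card : ℝ) ≤ Real.exp
      ((((b : ℝ) - 1) * weightSumBound w a r A 1 + 1) * M ^ ((r + 1) / (2 * r + 1))) := by
  have hM0 : 0 < M := by linarith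
  -- This choice of `t` makes both terms `t ^ (-((r + 1) / r))` and `t * M` of the Chernoff exponent
  -- equal to `M ^ ((r + 1) / (2 * r + 1))`.
  set t : ℝ := M ^ (-(r / (2 * r + 1))) with ht_def
  have ht : 0 < t := Real.rpow_pos_of_pos hM0 _
  have ht1 : t ≤ 1 := Real.rpow_le_one_of_one_le_of_nonpos hM (neg_nonpos.2 (by positivity))
  have htM : t * M = M ^ ((r + 1) / (2 * r + 1)) := by
    rw [ht_def, ← Real.rpow_add_one hM0.ne']
    congr 1
    field_simp
    ring
  have htpow : t ^ (-((r + 1) / r)) = M ^ ((r + 1) / (2 * r + 1)) := by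
    rw [ht_def, ← Real.rpow_mul hM0.le]
    congr 1
    field_simp
  have hb' : (0 : ℝ) ≤ b - 1 := sub_nonneg.2 (by exact_mod_cast hb.le)
  have hbound := weightSumBound_le_mul_rpow (w := w) (a := a) (A := A) hr ht ht1
  calc (F.card : ℝ)
      ≤ Real.exp (((b : ℝ) - 1) * weightSumBound w a r A t) * Real.exp (t * M) :=
        card_le_mul_exp_of_sum_exp_neg_mul_le ht.le
          (sum_exp_neg_mul_mdickWtV_le_exp_weightSumBound hb ha hr hgrow ht F) hF
    _ = Real.exp (((b : ℝ) - 1) * weightSumBound w a r A t + t * M) := (Real.exp_add _ _).symm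
    _ ≤ Real.exp (((b : ℝ) - 1) * (weightSumBound w a r A 1 * t ^ (-((r + 1) / r))) + t * M) := by
      gcongr
    _ = _ := by
      rw [htpow, htM]
      ring_nf

lemma card_le_exp_of_forall_mdickWtV_le {M : ℝ} (hM : 0 ≤ M) {F : Finset (Fin s → ℕ)}
    (hF : ∀ k ∈ F, mdickWtV b (fun j : Fin s => w j) k ≤ M) :
    (F.card : ℝ) ≤ Real.exp
      ((((b : ℝ) - 1) * weightSumBound w a r A 1 + 1) * M ^ ((r + 1) / (2 * r + 1))) := by
  rcases le_or_gt 1 M with hM1 | hM1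
  · exact card_le_exp_of_one_le_of_forall_mdickWtV_le hb ha hr hgrow hM1 hF
  · have hb' : (0 : ℝ) ≤ b - 1 := sub_nonneg.2 (by exact_mod_cast hb.le)
    have hbound := weightSumBound_nonneg (w := w) (A := A) ha hr one_pos
    have hcard : F.card ≤ 1 :=
      card_le_one_of_forall_mdickWtV_lt_one hb fun k hk => (hF k hk).trans_lt hM1
    exact (Nat.cast_le_one.2 hcard).trans (Real.one_le_exp (by positivity))

end Count

lemma mul_div_rpow_mul_rpow_rpow {c x y p q : ℝ} (hc : 0 < c) (hx : 0 ≤ x) (hy : 0 ≤ y)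
    (hpq : p * q = 1) : c * ((x / c) ^ p * y ^ p) ^ q = x * y := by
  rw [← Real.mul_rpow (by positivity) hy, ← Real.rpow_mul (by positivity), hpq, Real.rpow_one]
  field_simp

lemma card_le_minFac_pow_of_forall_mdickWtV_le {b s : ℕ} {w : ℕ → ℝ} {a r : ℝ} {A : ℕ}
    (hb : 1 < b) (ha : 0 < a) (hr : 0 < r)
    (hgrow : ∀ j : ℕ, A ≤ j → a * ((j : ℝ) + 1) ^ r ≤ w j) (d : ℕ) {F : Finset (Fin s → ℕ)}
    (hF : ∀ k ∈ F, mdickWtV b (fun j : Fin s => w j) k ≤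
      (Real.log b.minFac / (((b : ℝ) - 1) * weightSumBound w a r A 1 + 1)) ^
        ((2 * r + 1) / (r + 1)) * (d : ℝ) ^ ((2 * r + 1) / (r + 1))) :
    F.card ≤ b.minFac ^ d := by
  have hb' : (0 : ℝ) ≤ b - 1 := sub_nonneg.2 (by exact_mod_cast hb.le)
  have hbound := weightSumBound_nonneg (w := w) (A := A) ha hr one_pos
  have hcard := card_le_exp_of_forall_mdickWtV_le hb ha hr hgrow (by positivity) hF
  rw [mul_div_rpow_mul_rpow_rpow (by positivity) (by positivity) d.cast_nonneg (by field_simp),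
    mul_comm, Real.exp_nat_mul, Real.exp_log (by exact_mod_cast b.minFac_pos)] at hcard
  exact_mod_cast hcard

theorem statement18_general (b : ℕ) (hb : 2 ≤ b) (w : ℕ → ℝ)
    (a r : ℝ) (ha : 0 < a) (hr : 0 < r) (A : ℕ)
    (hgrow : ∀ j : ℕ, A ≤ j → a * ((j : ℝ) + 1) ^ r ≤ w j)
    (C D : ℝ)
    (hC : C = ((b : ℝ) - 1) * ((A : ℝ) + r⁻¹ * Real.Gamma (1 / r) * a ^ (-(1 / r))) +
      ((b : ℝ) - 1) * (∑' j : ℕ, (negCount (w j) : ℝ)) + 1)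
    (hD : D = (Real.log (Nat.minFac b) / C) ^ ((2 * r + 1) / (r + 1))) :
    ∃ Chat : ℝ, 0 < Chat ∧
      ∀ s d l : ℕ, (∀ j : Fin s, D * (d : ℝ) ^ ((2 * r + 1) / (r + 1)) - w j ≤ (l : ℝ)) →
        ∃ G : Fin s → Matrix (Fin l) (Fin d) (ZMod b),
          worstErr s {f | MemW' b (fun j : Fin s => w j) f} (normW' b (fun j : Fin s => w j))
              (qmcNet b G) ≤
            ENNReal.ofReal
              (Chat * Real.exp (-(D * Real.log b / 2) * (d : ℝ) ^ ((2 * r + 1) / (r + 1)))) := by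
  have hlogb : 0 < Real.log b := Real.log_pos (by exact_mod_cast hb)
  refine ⟨Real.exp (((b : ℝ) - 1) * weightSumBound w a r A (Real.log b / 2)), Real.exp_pos _,
    fun s d l hl => ?_⟩
  have hC' : C = ((b : ℝ) - 1) * weightSumBound w a r A 1 + 1 := by
    rw [hC, weightSumBound, Real.one_rpow]
    ring
  have hb' : (0 : ℝ) ≤ b - 1 := sub_nonneg.2 (by exact_mod_cast hb.trans' one_le_two)
  have hbound := weightSumBound_nonneg (w := w) (A := A) ha hr one_pos
  have hD0 : 0 ≤ D := by rw [hD, hC']; positivity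
  obtain ⟨G, hG⟩ := exists_forall_mem_dualNet_lt_mdickWtV hb hl (by positivity) fun F hF =>
    card_le_minFac_pow_of_forall_mdickWtV_le hb ha hr hgrow d (by rwa [← hC', ← hD])
  refine ⟨G, (worstErr_qmcNet_le hb G (half_le_self hlogb.le)
    (sum_exp_neg_mul_mdickWtV_le_exp_weightSumBound hb ha hr hgrow (half_pos hlogb))
    fun k hkG hk => (hG k hkG hk).le).trans_eq ?_⟩
  congr 3
  ring

/-- under the growth condition `a_j ≥ a·j^r` for `j > A`, there is a constant
`Chat > 0`, independent of `s` and `d`, such that for all `s` and `d ≥ 1` there is a digital net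
with `b^d` points and precision `l ≥ D·d^{(2r+1)/(r+1)} - 1 - a_1` whose worst-case error on
`W'_{s,a}` is at most `Chat·exp(-(D·log b/2)·d^{(2r+1)/(r+1)})` (the weight sequence `w` is
indexed from `0`, i.e. `w (j-1)` is the paper's `a_j`). -/
theorem statement18 (b : ℕ) (hb : 2 ≤ b) (w : ℕ → ℝ) (hw : Monotone w)
    (a r : ℝ) (ha : 0 < a) (hr : 0 < r) (A : ℕ)
    (hgrow : ∀ j : ℕ, A ≤ j → a * ((j : ℝ) + 1) ^ r ≤ w j)
    (C D : ℝ)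
    (hC : C = ((b : ℝ) - 1) * ((A : ℝ) + r⁻¹ * Real.Gamma (1 / r) * a ^ (-(1 / r))) +
      ((b : ℝ) - 1) * (∑' j : ℕ, (negCount (w j) : ℝ)) + 1)
    (hD : D = (Real.log (Nat.minFac b) / C) ^ ((2 * r + 1) / (r + 1))) :
    ∃ Chat : ℝ, 0 < Chat ∧
      ∀ s : ℕ, 0 < s → ∀ d : ℕ, 0 < d →
        ∃ l : ℕ, d ≤ l ∧
          D * (d : ℝ) ^ ((2 * r + 1) / (r + 1)) - 1 - w 0 ≤ (l : ℝ) ∧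
          ∃ G : Fin s → Matrix (Fin l) (Fin d) (ZMod b),
            worstErr s {f | MemW' b (fun j : Fin s => w j) f} (normW' b (fun j : Fin s => w j))
                (qmcNet b G) ≤
              ENNReal.ofReal
                (Chat * Real.exp (-(D * Real.log b / 2) * (d : ℝ) ^ ((2 * r + 1) / (r + 1)))) := by
  obtain ⟨Chat, hChat, hnet⟩ := statement18_general b hb w a r ha hr A hgrow C D hC hD
  refine ⟨Chat, hChat, fun s _ d _ => ?_⟩
  set M := D * (d : ℝ) ^ ((2 * r + 1) / (r + 1))
  have hl : M - w 0 ≤ (max d ⌈M - w 0⌉₊ : ℕ) :=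
    (Nat.le_ceil _).trans (Nat.cast_le.2 (le_max_right _ _))
  refine ⟨max d ⌈M - w 0⌉₊, le_max_left _ _, by linarith, hnet s d _ fun j => ?_⟩
  linarith [hw (Nat.zero_le j)]

end
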